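/- Let ψ : [0,∞) → [0,∞) be a convex admissible function and let f : ℝⁿ → ℝ ∪ {+∞} be a proper lower semicontinuous function with (x̄, 0) ∈ gph(∂f), where ∂f is the Mordukhovich limiting subdifferential. Suppose gph(∂f) is closed and that there exist κ, r ∈ (0,∞) such that κ‖h‖²·ψ'_+(d(x, (∂f)⁻¹(v − h))) ≤ ⟨z, h⟩ for all (x,v) ∈ gph(∂f) ∩ (B(x̄,r) × B(0,r)), all h ∈ B(0,r), and all z ∈ ∂²f(x,v)(h), where the inequality is in [−∞,+∞] with the conventions d(x,∅) := +∞, ψ'_+(+∞) := sup_{t≥0} ψ'_+(t) ∈ (0,+∞], and 0·(+∞) := 0. Then ∂f is metrically ψ-regular at (x̄, 0). -/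

import Mathlib

/-!
The argument works for any set-valued map `F` with closed graph, here `F = ∂f`. Fix `v ∈ F x` and a target `y`,
put `ε = ‖v - y‖`, and suppose `F⁻¹(y)` stays at distance at least `2 * l > 0` from `x`. The function
`(u, w) ↦ ‖w - y‖ + (ε / l ^ 2) * ‖u - x‖ ^ 2` attains its minimum over the graph of `F`, because
every graph point with `‖u - x‖ > l` or `‖w - y‖ > ε` has a value no smaller than the value `ε` taken
at `(x, v)` (`exists_penalized_min`). A minimizer `(u, w)` satisfies `‖u - x‖ ≤ l`, so that
`d(u, F⁻¹(y)) ≥ l` and `h := w - y ≠ 0`. Since the objective is differentiable where `w ≠ y`, Fermat's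
rule gives `z := -(2 * ε / l ^ 2) * ‖h‖ • (u - x) ∈ ∂²f(u, w)(h)` (`normal_of_min`). As
`w - h = y`, the hypothesis gives `κ * ψ'_+(l) ≤ 2 * ε / l`, and `ψ l ≤ l * ψ'_+(l)` by convexity,
hence `κ * ψ l ≤ 2 * ‖v - y‖` (`core_estimate`).

For `l = r / 4` and `‖v - y‖` below a small threshold `δ` this is impossible, as `ψ (r / 4) > 0`; so
`F⁻¹(y)` meets the ball of radius `r / 2` around `x`, and the estimate with `l = d(x, F⁻¹(y)) / 2`
is the regularity inequality with `τ = 1 / 2`. When `‖v - y‖ ≥ δ`, the same remark at `(xb, 0)`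
bounds `d(x, F⁻¹(y))` by `r`, and a large enough modulus suffices.
-/

open Set Filter Metric Topology
open scoped ENNReal RealInnerProductSpace

noncomputable section

/-- An admissible function `φ : [0,∞) → [0,∞)`: nondecreasing, `φ 0 = 0`, nonnegative,
and `φ (t n) → 0` implies `t n → 0` for nonnegative sequences. -/
def Admissible (φ : ℝ → ℝ) : Prop :=
  MonotoneOn φ (Ici 0) ∧ φ 0 = 0 ∧ (∀ t, 0 ≤ t → 0 ≤ φ t) ∧
  ∀ u : ℕ → ℝ, (∀ n, 0 ≤ u n) → Tendsto (fun n => φ (u n)) atTop (𝓝 0) →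
    Tendsto u atTop (𝓝 0)

/-- Proper lower semicontinuous extended-real-valued function. -/
def ProperLsc {X : Type*} [TopologicalSpace X] (f : X → EReal) : Prop :=
  (∃ x, f x ≠ ⊤) ∧ (∀ x, f x ≠ ⊥) ∧ LowerSemicontinuous f

/-- The right derivative `φ'_+(t)`. -/
def rightDer (φ : ℝ → ℝ) (t : ℝ) : ℝ := derivWithin φ (Ioi t) t

/-- The extension of `ψ` to `[0,∞]` with `ψ(∞) := sup_{t ≥ 0} ψ t`, with values in `[0,∞]`. -/
def psiE (ψ : ℝ → ℝ) (d : ℝ≥0∞) : ℝ≥0∞ :=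
  if d = ⊤ then ⨆ t ∈ Ici (0:ℝ), ENNReal.ofReal (ψ t)
  else ENNReal.ofReal (ψ d.toReal)

/-- `F` is metrically ψ-regular at `(xb, yb)`. -/
def MetricReg {X Y : Type*} [NormedAddCommGroup X] [NormedAddCommGroup Y]
    (ψ : ℝ → ℝ) (F : X → Set Y) (xb : X) (yb : Y) : Prop :=
  ∃ r > (0:ℝ), ∃ τ > (0:ℝ), ∃ κ > (0:ℝ),
    ∀ x ∈ ball xb r, ∀ y ∈ ball yb r,
      psiE ψ (ENNReal.ofReal τ * EMetric.infEdist x {x' | y ∈ F x'}) ≤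
        ENNReal.ofReal κ * EMetric.infEdist y (F x)

variable {n : ℕ}

/-- The Fréchet subdifferential of `f` at `x` (in Euclidean space). -/
def frechetSubE (f : EuclideanSpace ℝ (Fin n) → EReal) (x : EuclideanSpace ℝ (Fin n)) :
    Set (EuclideanSpace ℝ (Fin n)) :=
  {v | ∃ a : ℝ, f x = (a : EReal) ∧ ∀ ε > (0:ℝ), ∃ ρ > (0:ℝ), ∀ y, ‖y - x‖ < ρ →
    ((a + ⟪v, y - x⟫ - ε * ‖y - x‖ : ℝ) : EReal) ≤ f y}

/-- The Mordukhovich limiting subdifferential of `f` at `x`. -/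
def limSubE (f : EuclideanSpace ℝ (Fin n) → EReal) (x : EuclideanSpace ℝ (Fin n)) :
    Set (EuclideanSpace ℝ (Fin n)) :=
  {v | ∃ xk vk : ℕ → EuclideanSpace ℝ (Fin n),
    (∀ k, vk k ∈ frechetSubE f (xk k)) ∧ Tendsto xk atTop (𝓝 x) ∧
    Tendsto (fun k => f (xk k)) atTop (𝓝 (f x)) ∧ Tendsto vk atTop (𝓝 v)}

/-- The Fréchet normal cone to a subset of `ℝⁿ × ℝⁿ`. -/
def frechetNormal2 (S : Set (EuclideanSpace ℝ (Fin n) × EuclideanSpace ℝ (Fin n)))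
    (s0 : EuclideanSpace ℝ (Fin n) × EuclideanSpace ℝ (Fin n)) :
    Set (EuclideanSpace ℝ (Fin n) × EuclideanSpace ℝ (Fin n)) :=
  {w | ∀ ε > (0:ℝ), ∃ ρ > (0:ℝ), ∀ s ∈ S, ‖s - s0‖ < ρ →
    ⟪w.1, s.1 - s0.1⟫ + ⟪w.2, s.2 - s0.2⟫ ≤ ε * ‖s - s0‖}

/-- The limiting (Mordukhovich) normal cone to a subset of `ℝⁿ × ℝⁿ`. -/
def limNormal2 (S : Set (EuclideanSpace ℝ (Fin n) × EuclideanSpace ℝ (Fin n)))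
    (s0 : EuclideanSpace ℝ (Fin n) × EuclideanSpace ℝ (Fin n)) :
    Set (EuclideanSpace ℝ (Fin n) × EuclideanSpace ℝ (Fin n)) :=
  {w | ∃ sk wk : ℕ → EuclideanSpace ℝ (Fin n) × EuclideanSpace ℝ (Fin n),
    (∀ k, sk k ∈ S ∧ wk k ∈ frechetNormal2 S (sk k)) ∧
    Tendsto sk atTop (𝓝 s0) ∧ Tendsto wk atTop (𝓝 w)}

/-- The graph of a set-valued map. -/
def gphSV (F : EuclideanSpace ℝ (Fin n) → Set (EuclideanSpace ℝ (Fin n))) :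
    Set (EuclideanSpace ℝ (Fin n) × EuclideanSpace ℝ (Fin n)) :=
  {p | p.2 ∈ F p.1}

/-- The second subdifferential associated with a subdifferential map `F`:
`∂²f(x,v)(h) = {z : (z,-h) ∈ Ñ(gph F, (x,v))}`. -/
def secondSub (F : EuclideanSpace ℝ (Fin n) → Set (EuclideanSpace ℝ (Fin n)))
    (x v h : EuclideanSpace ℝ (Fin n)) : Set (EuclideanSpace ℝ (Fin n)) :=
  {z | (z, -h) ∈ limNormal2 (gphSV F) (x, v)}

open scoped Classical

/-- `ψ'_+(d(x,S))` as an extended real, with the conventions `d(x,∅) = +∞` and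
`ψ'_+(+∞) = sup_{t ≥ 0} ψ'_+(t)`. -/
def rightDerDist (ψ : ℝ → ℝ) (x : EuclideanSpace ℝ (Fin n))
    (S : Set (EuclideanSpace ℝ (Fin n))) : EReal :=
  if S.Nonempty then ((rightDer ψ (infDist x S) : ℝ) : EReal)
  else ⨆ t ∈ Ici (0:ℝ), ((rightDer ψ t : ℝ) : EReal)

/-- Convexity and `ψ 0 = 0`: the secant slope `ψ l / l` is at most `ψ'_+(t)` for `t ≥ l`. -/
lemma div_le_rightDer {ψ : ℝ → ℝ} (h0 : ψ 0 = 0) (hconv : ConvexOn ℝ (Ici 0) ψ)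
    {l t : ℝ} (hl : 0 < l) (hlt : l ≤ t) : ψ l / l ≤ rightDer ψ t := by
  have hint : ∀ s : ℝ, 0 < s → s ∈ interior (Ici (0:ℝ)) := fun s hs => by
    rw [interior_Ici]; exact hs
  have h1 : slope ψ 0 l ≤ derivWithin ψ (Iio l) l :=
    hconv.slope_le_leftDeriv_of_mem_interior (mem_Ici.2 le_rfl) (hint l hl) hl
  have h2 := hconv.leftDeriv_le_rightDeriv_of_mem_interior (hint l hl)
  have h3 := hconv.monotoneOn_rightDeriv (hint l hl) (hint t (hl.trans_le hlt)) hlt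
  rw [slope_def_field, h0, sub_zero, sub_zero] at h1
  exact h1.trans (h2.trans h3)

lemma div_le_rightDerDist {ψ : ℝ → ℝ} (h0 : ψ 0 = 0) (hconv : ConvexOn ℝ (Ici 0) ψ)
    {l : ℝ} (hl : 0 < l) (x : EuclideanSpace ℝ (Fin n)) (S : Set (EuclideanSpace ℝ (Fin n)))
    (hS : ∀ s ∈ S, l ≤ dist x s) : ((ψ l / l : ℝ) : EReal) ≤ rightDerDist ψ x S := by
  unfold rightDerDist
  split_ifs with hne
  · exact EReal.coe_le_coe_iff.2
      (div_le_rightDer h0 hconv hl ((le_infDist hne).2 fun {y} hy => hS y hy))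
  · refine le_trans (EReal.coe_le_coe_iff.2 (div_le_rightDer h0 hconv hl le_rfl)) ?_
    exact le_iSup₂ (f := fun (t : ℝ) (_ : t ∈ Ici (0:ℝ)) => ((rightDer ψ t : ℝ) : EReal))
      l hl.le

/-- A Fréchet normal is a limiting normal, through constant sequences. -/
lemma limNormal2_of_frechet {S : Set (EuclideanSpace ℝ (Fin n) × EuclideanSpace ℝ (Fin n))}
    {s w : EuclideanSpace ℝ (Fin n) × EuclideanSpace ℝ (Fin n)} (hs : s ∈ S)
    (hw : w ∈ frechetNormal2 S s) : w ∈ limNormal2 S s :=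
  ⟨fun _ => s, fun _ => w, fun _ => ⟨hs, hw⟩, tendsto_const_nhds, tendsto_const_nhds⟩

/-- Existence of a minimizer of the penalized distance `‖w - y‖ + c * ‖u - x‖ ^ 2` over a closed
set. The calibration `c * l ^ 2 = ‖v - y‖` makes points outside the compact box
`closedBall x l ×ˢ closedBall y ‖v - y‖` no better than `(x, v)`. -/
lemma exists_penalized_min {S : Set (EuclideanSpace ℝ (Fin n) × EuclideanSpace ℝ (Fin n))}
    (hS : IsClosed S) {x v y : EuclideanSpace ℝ (Fin n)} (hxv : (x, v) ∈ S) {l c : ℝ}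
    (hl : 0 < l) (hc : 0 ≤ c) (hcl : c * l ^ 2 = ‖v - y‖) :
    ∃ p ∈ S, ‖p.1 - x‖ ≤ l ∧ ‖p.2 - y‖ + c * ‖p.1 - x‖ ^ 2 ≤ ‖v - y‖ ∧
      ∀ q ∈ S, ‖p.2 - y‖ + c * ‖p.1 - x‖ ^ 2 ≤ ‖q.2 - y‖ + c * ‖q.1 - x‖ ^ 2 := by
  have hK : IsCompact (closedBall x l ×ˢ closedBall y ‖v - y‖ ∩ S) :=
    ((isCompact_closedBall x l).prod (isCompact_closedBall y _)).inter_right hS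
  have hmem : (x, v) ∈ closedBall x l ×ˢ closedBall y ‖v - y‖ ∩ S :=
    ⟨⟨mem_closedBall_self hl.le, by simp [dist_eq_norm]⟩, hxv⟩
  obtain ⟨p, hp, hmin⟩ := hK.exists_isMinOn ⟨_, hmem⟩
    (f := fun q => ‖q.2 - y‖ + c * ‖q.1 - x‖ ^ 2) (by fun_prop)
  have hpx : ‖p.2 - y‖ + c * ‖p.1 - x‖ ^ 2 ≤ ‖v - y‖ := by simpa using hmin hmem
  refine ⟨p, hp.2, ?_, hpx, fun q hq => ?_⟩
  · rw [← dist_eq_norm]; exact hp.1.1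
  · by_cases hqK : q ∈ closedBall x l ×ˢ closedBall y ‖v - y‖
    · exact hmin ⟨hqK, hq⟩
    · refine hpx.trans ?_
      have hn := norm_nonneg (q.2 - y)
      have hcq : 0 ≤ c * ‖q.1 - x‖ ^ 2 := by positivity
      rw [mem_prod, not_and_or, mem_closedBall, mem_closedBall, dist_eq_norm, dist_eq_norm,
        not_le, not_le] at hqK
      rcases hqK with h | h
      · have : c * l ^ 2 ≤ c * ‖q.1 - x‖ ^ 2 := by gcongr
        linarith
      · linarith

/-- Fermat's rule for the penalized distance, multiplied by `‖p.2 - y‖` to clear the denominator in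
the gradient of the norm; for `p.2 = y` the normal is zero and the assertion is trivial. -/
lemma normal_of_min {S : Set (EuclideanSpace ℝ (Fin n) × EuclideanSpace ℝ (Fin n))}
    {x y : EuclideanSpace ℝ (Fin n)} {p : EuclideanSpace ℝ (Fin n) × EuclideanSpace ℝ (Fin n)}
    {c : ℝ} (hc : 0 ≤ c)
    (hmin : ∀ q ∈ S, ‖p.2 - y‖ + c * ‖p.1 - x‖ ^ 2 ≤ ‖q.2 - y‖ + c * ‖q.1 - x‖ ^ 2) :
    ((-(2 * c * ‖p.2 - y‖)) • (p.1 - x), -(p.2 - y)) ∈ frechetNormal2 S p := by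
  intro ε hε
  set h := p.2 - y with hh
  have hA : 0 < 1 / 2 + c * ‖h‖ := by positivity
  refine ⟨ε / (1 / 2 + c * ‖h‖), by positivity, fun s hs hsp => ?_⟩
  set a := s.1 - p.1 with ha
  set b := s.2 - p.2 with hb
  have e1 : s.1 - x = (p.1 - x) + a := by rw [ha]; abel
  have e2 : s.2 - y = h + b := by rw [hb, hh]; abel
  have hm := hmin s hs
  rw [e1, e2, norm_add_sq_real] at hm
  -- Concavity of the square root, in the form `2 * ‖h‖ * ‖h + b‖ ≤ ‖h‖ ^ 2 + ‖h + b‖ ^ 2`.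
  have hsq : ‖h‖ * ‖h + b‖ ≤ ‖h‖ ^ 2 + ⟪h, b⟫ + ‖b‖ ^ 2 / 2 := by
    have := norm_add_sq_real h b
    nlinarith [sq_nonneg (‖h‖ - ‖h + b‖)]
  have hm' := mul_le_mul_of_nonneg_left hm (norm_nonneg h)
  have han : ‖a‖ ≤ ‖s - p‖ := norm_fst_le (s - p)
  have hbn : ‖b‖ ≤ ‖s - p‖ := norm_snd_le (s - p)
  have ha2 : ‖a‖ ^ 2 ≤ ‖s - p‖ ^ 2 := by gcongr
  have hb2 : ‖b‖ ^ 2 ≤ ‖s - p‖ ^ 2 := by gcongr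
  have hch : 0 ≤ c * ‖h‖ := by positivity
  have ha3 := mul_le_mul_of_nonneg_left ha2 hch
  have hlt : (1 / 2 + c * ‖h‖) * ‖s - p‖ ≤ ε := by
    rw [lt_div_iff₀ hA] at hsp; linarith
  have hfin := mul_le_mul_of_nonneg_right hlt (norm_nonneg (s - p))
  simp only [inner_neg_left, inner_smul_left, conj_trivial]
  nlinarith

/-- The decrease estimate: if `F⁻¹(y)` is at distance at least `2 * l` from `x` (or empty), then
`κ * ψ l ≤ 2 * ‖v - y‖` for every `v ∈ F x`. -/
lemma core_estimate {ψ : ℝ → ℝ} (h0 : ψ 0 = 0) (hconv : ConvexOn ℝ (Ici 0) ψ)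
    (F : EuclideanSpace ℝ (Fin n) → Set (EuclideanSpace ℝ (Fin n)))
    (xb : EuclideanSpace ℝ (Fin n)) (hclosed : IsClosed (gphSV F))
    {κ r : ℝ} (hκ : 0 < κ)
    (hyp : ∀ x v h z, v ∈ F x → x ∈ ball xb r →
      v ∈ ball (0 : EuclideanSpace ℝ (Fin n)) r →
      h ∈ ball (0 : EuclideanSpace ℝ (Fin n)) r →
      z ∈ secondSub F x v h →
      ((κ * ‖h‖ ^ 2 : ℝ) : EReal) * rightDerDist ψ x {x' | v - h ∈ F x'} ≤
        ((⟪z, h⟫ : ℝ) : EReal))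
    {x v y : EuclideanSpace ℝ (Fin n)} {l : ℝ} (hl : 0 < l) (hv : v ∈ F x)
    (hx : dist x xb + l < r) (hy : ‖y‖ + ‖v - y‖ < r)
    (hfar : ∀ s, y ∈ F s → 2 * l ≤ dist x s) :
    κ * ψ l ≤ 2 * ‖v - y‖ := by
  set c : ℝ := ‖v - y‖ / l ^ 2 with hc
  have hc0 : 0 ≤ c := by positivity
  have hcl : c * l ^ 2 = ‖v - y‖ := by rw [hc]; field_simp
  obtain ⟨⟨u, w⟩, hp, hul, hval, hmin⟩ := exists_penalized_min hclosed (x := x) (v := v) (y := y)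
    hv hl hc0 hcl
  have hN := normal_of_min (S := gphSV F) hc0 hmin
  simp only at hul hval hN
  have hpen : 0 ≤ c * ‖u - x‖ ^ 2 := by positivity
  have hwε : ‖w - y‖ ≤ ‖v - y‖ := by linarith
  have hxu : dist x u ≤ l := by rw [dist_comm, dist_eq_norm]; exact hul
  have hfaru : ∀ s, y ∈ F s → l ≤ dist u s := fun s hs => by
    have := hfar s hs
    have := dist_triangle x u s
    linarith
  have hwy : 0 < ‖w - y‖ := by
    rw [norm_pos_iff, sub_ne_zero]
    rintro rfl
    have := hfaru u hp
    rw [dist_self] at this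
    linarith
  have hmain := hyp u w (w - y) _ hp
    (by
      rw [mem_ball]
      have := dist_triangle u x xb
      rw [dist_comm u x] at this
      linarith)
    (by
      rw [mem_ball_zero_iff]
      have := norm_add_le (w - y) y
      rw [sub_add_cancel] at this
      linarith)
    (by
      rw [mem_ball_zero_iff]
      linarith [norm_nonneg y])
    (limNormal2_of_frechet hp hN)
  rw [sub_sub_cancel] at hmain
  have hR := div_le_rightDerDist h0 hconv hl u {x' | y ∈ F x'} hfaru
  have hk0 : (0 : EReal) ≤ ((κ * ‖w - y‖ ^ 2 : ℝ) : EReal) :=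
    EReal.coe_nonneg.2 (by positivity)
  have hfin := (mul_le_mul_of_nonneg_left hR hk0).trans hmain
  rw [← EReal.coe_mul, EReal.coe_le_coe_iff, inner_smul_left, conj_trivial] at hfin
  have hcs : -⟪u - x, w - y⟫ ≤ l * ‖w - y‖ := by
    have h1 := neg_le_of_abs_le (abs_real_inner_le_norm (u - x) (w - y))
    have h2 := mul_le_mul_of_nonneg_right hul hwy.le
    linarith
  have h3 : κ * ‖w - y‖ ^ 2 * (ψ l / l) ≤ 2 * c * ‖w - y‖ * (l * ‖w - y‖) := by
    have := mul_le_mul_of_nonneg_left hcs (show 0 ≤ 2 * c * ‖w - y‖ by positivity)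
    linarith
  have h4 : ‖w - y‖ ^ 2 * (κ * (ψ l / l)) ≤ ‖w - y‖ ^ 2 * (2 * c * l) := by linarith
  have h5 := le_of_mul_le_mul_left h4 (by positivity)
  have h6 := mul_le_mul_of_nonneg_right h5 hl.le
  have h7 : κ * (ψ l / l) * l = κ * ψ l := by field_simp
  rw [h7] at h6
  nlinarith

/-- The result for an arbitrary set-valued map with closed graph. -/
lemma metricReg_of_secondSub {ψ : ℝ → ℝ} (hadm : Admissible ψ) (hconv : ConvexOn ℝ (Ici 0) ψ)
    (F : EuclideanSpace ℝ (Fin n) → Set (EuclideanSpace ℝ (Fin n)))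
    (xb : EuclideanSpace ℝ (Fin n)) (hxb : (0 : EuclideanSpace ℝ (Fin n)) ∈ F xb)
    (hclosed : IsClosed (gphSV F)) {κ r : ℝ} (hκ : 0 < κ) (hr : 0 < r)
    (hyp : ∀ x v h z, v ∈ F x → x ∈ ball xb r →
      v ∈ ball (0 : EuclideanSpace ℝ (Fin n)) r →
      h ∈ ball (0 : EuclideanSpace ℝ (Fin n)) r →
      z ∈ secondSub F x v h →
      ((κ * ‖h‖ ^ 2 : ℝ) : EReal) * rightDerDist ψ x {x' | v - h ∈ F x'} ≤
        ((⟪z, h⟫ : ℝ) : EReal)) :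
    MetricReg ψ F xb (0 : EuclideanSpace ℝ (Fin n)) := by
  obtain ⟨hmono, h0, hnn, hadm'⟩ := hadm
  -- A constant sequence in the last clause of admissibility shows that `ψ` is positive off `0`.
  have hpos : ∀ t, 0 < t → 0 < ψ t := fun t ht => by
    refine lt_of_le_of_ne (hnn t ht.le) fun he => ht.ne' ?_
    have := hadm' (fun _ => t) (fun _ => ht.le) (by simp [← he])
    exact tendsto_nhds_unique tendsto_const_nhds this
  have hψ4 := hpos (r / 4) (by positivity)
  obtain ⟨δ, hδ0, hδr, hδψ⟩ : ∃ δ : ℝ, 0 < δ ∧ δ ≤ r / 4 ∧ δ ≤ κ * ψ (r / 4) / 2 :=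
    ⟨min (r / 4) (κ * ψ (r / 4) / 2), lt_min (by positivity) (by positivity),
      min_le_left _ _, min_le_right _ _⟩
  have hnear : ∀ x v y, v ∈ F x → dist x xb < δ → ‖y‖ < δ → ‖v - y‖ < δ →
      ∃ s, y ∈ F s ∧ dist x s < r / 2 := by
    intro x v y hv hx hy hvy
    by_contra! hno
    have := core_estimate h0 hconv F xb hclosed hκ hyp (x := x) (v := v) (y := y)
      (l := r / 4) (by positivity) hv (by linarith) (by linarith)
      (fun s hs => by have := hno s hs; linarith)
    linarith
  have hK0 : 0 < 2 / κ + ψ (r / 2) / δ :=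
    add_pos_of_pos_of_nonneg (by positivity) (div_nonneg (hnn _ (by positivity)) hδ0.le)
  refine ⟨δ, hδ0, 1 / 2, by norm_num, 2 / κ + ψ (r / 2) / δ, hK0, fun x hx y hy => ?_⟩
  rw [mem_ball] at hx
  rw [mem_ball_zero_iff] at hy
  set S := {x' | y ∈ F x'} with hS
  obtain ⟨s, hs, hsd⟩ := hnear xb 0 y hxb (by simpa using hδ0) hy (by simpa using hy)
  have hne : S.Nonempty := ⟨s, hs⟩
  have hreal : ∀ v ∈ F x, ψ (infDist x S / 2) ≤ (2 / κ + ψ (r / 2) / δ) * ‖v - y‖ := by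
    intro v hv
    have hd0 : 0 ≤ infDist x S := infDist_nonneg
    have hψ2 : 0 ≤ ψ (r / 2) := hnn _ (by positivity)
    rw [add_mul]
    rcases lt_or_ge ‖v - y‖ δ with hlt | hge
    · obtain ⟨s', hs', hsd'⟩ := hnear x v y hv hx hy hlt
      have hd : infDist x S < r / 2 := (infDist_le_dist_of_mem (s := S) hs').trans_lt hsd'
      have hrest : 0 ≤ ψ (r / 2) / δ * ‖v - y‖ := by positivity
      rcases hd0.eq_or_lt with he | hlt0
      · rw [← he, zero_div, h0]
        positivity
      · have := core_estimate h0 hconv F xb hclosed hκ hyp (x := x) (v := v) (y := y)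
          (l := infDist x S / 2) (by positivity) hv (by linarith) (by linarith)
          (fun s hs => by
            have : infDist x S ≤ dist x s := infDist_le_dist_of_mem (s := S) hs
            linarith)
        have h2 : ψ (infDist x S / 2) ≤ 2 / κ * ‖v - y‖ := by
          rw [div_mul_eq_mul_div, le_div_iff₀ hκ]
          linarith
        linarith
    · have hd : infDist x S ≤ dist x s := infDist_le_dist_of_mem (s := S) hs
      have htri := dist_triangle x xb s
      have h1 : ψ (infDist x S / 2) ≤ ψ (r / 2) :=
        hmono (mem_Ici.2 (by positivity)) (mem_Ici.2 (by positivity)) (by linarith)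
      have h2 : ψ (r / 2) ≤ ψ (r / 2) / δ * ‖v - y‖ := by
        rw [div_mul_eq_mul_div, le_div_iff₀ hδ0]
        exact mul_le_mul_of_nonneg_left hge hψ2
      have h3 : 0 ≤ 2 / κ * ‖v - y‖ := by positivity
      linarith
  have htop : Metric.infEDist x S ≠ ⊤ := infEDist_ne_top hne
  have hlhs : psiE ψ (ENNReal.ofReal (1 / 2) * Metric.infEDist x S) =
      ENNReal.ofReal (ψ (infDist x S / 2)) := by
    unfold psiE
    rw [if_neg (ENNReal.mul_ne_top ENNReal.ofReal_ne_top htop), ENNReal.toReal_mul,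
      ENNReal.toReal_ofReal (by norm_num)]
    congr 2
    rw [infDist]
    ring
  change psiE ψ (ENNReal.ofReal (1 / 2) * Metric.infEDist x S) ≤
    _ * Metric.infEDist y (F x)
  rw [hlhs, mul_comm, ← ENNReal.div_le_iff (ENNReal.ofReal_pos.2 hK0).ne' ENNReal.ofReal_ne_top,
    Metric.le_infEDist]
  intro v hv
  rw [ENNReal.div_le_iff (ENNReal.ofReal_pos.2 hK0).ne' ENNReal.ofReal_ne_top, edist_dist,
    ← ENNReal.ofReal_mul dist_nonneg, dist_comm, dist_eq_norm, mul_comm]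
  exact ENNReal.ofReal_le_ofReal (hreal v hv)

/-- Proposition 6.1. -/
theorem stmt_13
    (ψ : ℝ → ℝ) (hadm : Admissible ψ) (hconv : ConvexOn ℝ (Ici 0) ψ)
    (f : EuclideanSpace ℝ (Fin n) → EReal) (hf : ProperLsc f)
    (xb : EuclideanSpace ℝ (Fin n)) (hxb : (0 : EuclideanSpace ℝ (Fin n)) ∈ limSubE f xb)
    (hclosed : IsClosed (gphSV (limSubE f)))
    (κ r : ℝ) (hκ : 0 < κ) (hr : 0 < r)
    (hyp : ∀ x v h z, v ∈ limSubE f x → x ∈ ball xb r →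
      v ∈ ball (0 : EuclideanSpace ℝ (Fin n)) r →
      h ∈ ball (0 : EuclideanSpace ℝ (Fin n)) r →
      z ∈ secondSub (limSubE f) x v h →
      ((κ * ‖h‖ ^ 2 : ℝ) : EReal) * rightDerDist ψ x {x' | v - h ∈ limSubE f x'} ≤
        ((⟪z, h⟫ : ℝ) : EReal)) :
    MetricReg ψ (limSubE f) xb (0 : EuclideanSpace ℝ (Fin n)) := by
  exact metricReg_of_secondSub hadm hconv (limSubE f) xb hxb hclosed hκ hr hyp

end
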